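/- Let A be a solvable finite-dimensional left Leibniz algebra over a field F of characteristic zero. Then A² = A·A is nilpotent. -/

import Mathlib

open Submodule

section LeibnizDefs

variable {F : Type*} {A : Type*} [Field F] [AddCommGroup A] [Module F A]

/-- The span of all products `b*c` with `b ∈ B`, `c ∈ C`. -/
def mulSub (mul : A →ₗ[F] A →ₗ[F] A) (B C : Submodule F A) : Submodule F A :=
  Submodule.span F {z : A | ∃ b ∈ B, ∃ c ∈ C, mul b c = z}

/-- `fSub mul B C = B·C + C·B`, the function `f(B,C)`. -/
def fSub (mul : A →ₗ[F] A →ₗ[F] A) (B C : Submodule F A) : Submodule F A :=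
  mulSub mul B C ⊔ mulSub mul C B

/-- `fIter mul B C n = f^{n+1}(B,C)` (so index `0` is `f^1(B,C) = f(B,C)`). -/
def fIter (mul : A →ₗ[F] A →ₗ[F] A) (B C : Submodule F A) : ℕ → Submodule F A
  | 0 => fSub mul B C
  | n + 1 => fSub mul B (fIter mul B C n)

/-- `lcs mul B n = B^{n+1}`, the lower central series (index `0` is `B^1 = B`). -/
def lcs (mul : A →ₗ[F] A →ₗ[F] A) (B : Submodule F A) : ℕ → Submodule F A
  | 0 => B
  | n + 1 => mulSub mul B (lcs mul B n)

/-- `ds mul B n = B^{(n+1)}`, the derived series (index `0` is `B^{(1)} = B`). -/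
def ds (mul : A →ₗ[F] A →ₗ[F] A) (B : Submodule F A) : ℕ → Submodule F A
  | 0 => B
  | n + 1 => mulSub mul (ds mul B n) (ds mul B n)

/-- `B^ω = ⋂_{i ≥ 1} B^i`. -/
def omegaSub (mul : A →ₗ[F] A →ₗ[F] A) (B : Submodule F A) : Submodule F A :=
  ⨅ n, lcs mul B n

/-- `B` is a subalgebra: a subspace closed under multiplication. -/
def IsSubalg (mul : A →ₗ[F] A →ₗ[F] A) (B : Submodule F A) : Prop :=
  ∀ x ∈ B, ∀ y ∈ B, mul x y ∈ B

/-- `I` is an ideal of the subalgebra `S`: `I ⊆ S` and `xI + Ix ⊆ I` for all `x ∈ S`. -/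
def IsIdealIn (mul : A →ₗ[F] A →ₗ[F] A) (I S : Submodule F A) : Prop :=
  I ≤ S ∧ ∀ x ∈ S, ∀ y ∈ I, mul x y ∈ I ∧ mul y x ∈ I

/-- `B` is subinvariant in `S`: there is a chain of subalgebras
`B = c 0 ⊆ c 1 ⊆ ⋯ ⊆ c t = S` with each term an ideal of the next. -/
def IsSubinvariantIn (mul : A →ₗ[F] A →ₗ[F] A) (B S : Submodule F A) : Prop :=
  ∃ (t : ℕ) (c : ℕ → Submodule F A), c 0 = B ∧ c t = S ∧
    (∀ i ≤ t, IsSubalg mul (c i)) ∧ ∀ i < t, IsIdealIn mul (c i) (c (i + 1))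

/-- `B` is nilpotent: `B^m = 0` for some `m`. -/
def IsNilpotentSub (mul : A →ₗ[F] A →ₗ[F] A) (B : Submodule F A) : Prop :=
  ∃ m, lcs mul B m = ⊥

/-- `B` is solvable: `B^{(m)} = 0` for some `m`. -/
def IsSolvableSub (mul : A →ₗ[F] A →ₗ[F] A) (B : Submodule F A) : Prop :=
  ∃ m, ds mul B m = ⊥

/-- The centralizer `Z_A(B) = {x : xb = 0 = bx for all b ∈ B}`. -/
def centralizerSet (mul : A →ₗ[F] A →ₗ[F] A) (B : Submodule F A) : Set A :=
  {x : A | ∀ b ∈ B, mul x b = 0 ∧ mul b x = 0}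

/-- `R` is the radical (the maximal solvable ideal) of the subalgebra `S`. -/
def IsRadicalIn (mul : A →ₗ[F] A →ₗ[F] A) (S R : Submodule F A) : Prop :=
  IsIdealIn mul R S ∧ IsSolvableSub mul R ∧
    ∀ T, IsIdealIn mul T S → IsSolvableSub mul T → T ≤ R

/-- `N` is the nilradical (the maximal nilpotent ideal) of the subalgebra `S`. -/
def IsNilradicalIn (mul : A →ₗ[F] A →ₗ[F] A) (S N : Submodule F A) : Prop :=
  IsIdealIn mul N S ∧ IsNilpotentSub mul N ∧
    ∀ T, IsIdealIn mul T S → IsNilpotentSub mul T → T ≤ N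

/-- `H` is a Cartan subalgebra: a nilpotent self-normalizing subalgebra. -/
def IsCartan (mul : A →ₗ[F] A →ₗ[F] A) (H : Submodule F A) : Prop :=
  IsSubalg mul H ∧ IsNilpotentSub mul H ∧
    ∀ x : A, (∀ h ∈ H, mul x h ∈ H ∧ mul h x ∈ H) → x ∈ H

/-- The subalgebra generated by a set: the smallest subalgebra containing it. -/
def subalgGen (mul : A →ₗ[F] A →ₗ[F] A) (s : Set A) : Submodule F A :=
  sInf {S : Submodule F A | IsSubalg mul S ∧ s ⊆ (S : Set A)}

end LeibnizDefs

/-!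
Let `G` be the Lie algebra of left multiplications of `A`. It is solvable because its derived series
is the image of that of `A`, and `A²` acts on `A` through `D = ⁅G, G⁆`, so it suffices that the
chain `A ⊇ D·A ⊇ D·(D·A) ⊇ ⋯` reaches `0`. The chain stabilises at some `N = D·N`. If `N` were
nonzero then, over an algebraic closure, Lie's theorem for the *dual* of `N` would give a linear
form `φ ≠ 0` that `G` scales by a weight. Weights vanish on `D`, so `φ` is zero on `D·N = N`, a
contradiction.
-/

section LieModules

open LieAlgebra TensorProduct

variable {R K L M : Type*} [LieRing L] [AddCommGroup M] [LieRingModule L M]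

theorem derivedSeries_one_le_ker_weightSpace [CommRing R] [LieAlgebra R L] [Module R M]
    [LieModule R L M] (χ : L → R) :
    derivedSeries R L 1 ≤ LieModule.ker R L (LieModule.weightSpace M χ) := by
  refine (LieSubmodule.lie_le_iff _ _ _).mpr fun x _ y _ ↦
    (LieModule.mem_ker R L _ _).mpr fun v ↦ ?_
  have lie_eq_smul (z : L) (w : LieModule.weightSpace M χ) : ⁅z, w⁆ = χ z • w :=
    Subtype.ext ((LieModule.mem_weightSpace χ w.1).mp w.2 z)
  rw [lie_lie]
  simp only [lie_eq_smul, smul_comm (χ y) (χ x), sub_self]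

variable [Field K] [CharZero K] [LieAlgebra K L] [IsSolvable L]
  [Module K M] [LieModule K L M] [FiniteDimensional K M]

theorem exists_ne_zero_forall_mem_derivedSeries_one_lie_eq_zero [IsAlgClosed K] [Nontrivial M] :
    ∃ v : M, v ≠ 0 ∧ ∀ x ∈ derivedSeries K L 1, ⁅x, v⁆ = 0 := by
  obtain ⟨χ, _⟩ := LieModule.exists_nontrivial_weightSpace_of_isSolvable K L M
  obtain ⟨v, hv⟩ := exists_ne (0 : LieModule.weightSpace M χ)
  refine ⟨v, by simpa using hv, fun x hx ↦ ?_⟩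
  have hx_ker := derivedSeries_one_le_ker_weightSpace (M := M) χ hx
  exact congrArg Subtype.val ((LieModule.mem_ker K L _ _).mp hx_ker v)

theorem derivedSeries_one_lie_top_ne_top_of_isAlgClosed [IsAlgClosed K] [Nontrivial M] :
    ⁅derivedSeries K L 1, (⊤ : LieSubmodule K L M)⁆ ≠ ⊤ := by
  intro h
  obtain ⟨φ, hφ, hφ_lie⟩ := exists_ne_zero_forall_mem_derivedSeries_one_lie_eq_zero
    (K := K) (L := L) (M := Module.Dual K M)
  have lie_top_le_ker : ⁅derivedSeries K L 1, (⊤ : LieSubmodule K L M)⁆.toSubmodule ≤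
      LinearMap.ker φ := by
    rw [LieSubmodule.lieIdeal_oper_eq_linear_span', Submodule.span_le]
    rintro _ ⟨x, hx, m, -, rfl⟩
    simpa using LinearMap.congr_fun (hφ_lie x hx) m
  rw [h, LieSubmodule.top_toSubmodule, top_le_iff, LinearMap.ker_eq_top] at lie_top_le_ker
  exact hφ lie_top_le_ker

variable (K L M)

theorem derivedSeries_one_lie_top_ne_top [Nontrivial M] :
    ⁅derivedSeries K L 1, (⊤ : LieSubmodule K L M)⁆ ≠ ⊤ := by
  intro h
  let K' := AlgebraicClosure K
  have : CharZero K' := charZero_of_injective_algebraMap (algebraMap K K').injective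
  refine derivedSeries_one_lie_top_ne_top_of_isAlgClosed
    (K := K') (L := K' ⊗[K] L) (M := K' ⊗[K] M) ?_
  rw [derivedSeries_baseChange, ← LieSubmodule.baseChange_top, ← LieSubmodule.lie_baseChange, h]

variable {K L M} in
theorem eq_bot_of_derivedSeries_one_lie_eq_self {N : LieSubmodule K L M}
    (h : ⁅derivedSeries K L 1, N⁆ = N) : N = ⊥ := by
  by_contra hN
  have : Nontrivial N := (LieSubmodule.nontrivial_iff_ne_bot K L M).mpr hN
  refine derivedSeries_one_lie_top_ne_top K L N ?_
  rw [← N.comap_incl_self, ← LieSubmodule.comap_bracket_eq (hf₁ := N.ker_incl)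
    (hf₂ := N.range_incl.ge), h]

theorem exists_lcs_derivedSeries_one_eq_bot : ∃ k, (derivedSeries K L 1).lcs M k = ⊥ := by
  have lcs_antitone : Antitone ((derivedSeries K L 1).lcs M) :=
    antitone_nat_of_succ_le fun k ↦ by
      rw [LieIdeal.lcs_succ]
      exact LieSubmodule.lie_le_right _ _
  have := LieSubmodule.wellFoundedLT_of_isArtinian K L M
  obtain ⟨k, hk⟩ := WellFoundedLT.antitone_chain_condition lcs_antitone
  refine ⟨k, eq_bot_of_derivedSeries_one_lie_eq_self ?_⟩
  rw [← LieIdeal.lcs_succ]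
  exact (hk (k + 1) k.le_succ).symm

end LieModules

/-- `mul` is a left Leibniz product: each left multiplication `mul x` is a derivation. -/
def IsLeftLeibniz {F A : Type*} [Field F] [AddCommGroup A] [Module F A]
    (mul : A →ₗ[F] A →ₗ[F] A) : Prop :=
  ∀ x y z : A, mul x (mul y z) = mul (mul x y) z + mul y (mul x z)

section LeibnizAlgebras

variable {F A : Type*} [Field F] [AddCommGroup A] [Module F A] {mul : A →ₗ[F] A →ₗ[F] A}

theorem mulSub_eq_map₂ (B C : Submodule F A) : mulSub mul B C = Submodule.map₂ mul B C :=
  (Submodule.map₂_eq_span_image2 mul B C).symm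

namespace IsLeftLeibniz

open LieAlgebra

attribute [local instance] LieRing.ofAssociativeRing

theorem mul_mul_eq_lie (h : IsLeftLeibniz mul) (x y : A) : mul (mul x y) = ⁅mul x, mul y⁆ := by
  ext z
  exact eq_sub_of_add_eq (h x y z).symm

/-- The Lie algebra of left multiplications of a left Leibniz algebra, acting on it
by evaluation. -/
def leftMulLieSubalgebra (h : IsLeftLeibniz mul) : LieSubalgebra F (Module.End F A) where
  __ := LinearMap.range mul
  lie_mem' := by
    rintro _ _ ⟨x, rfl⟩ ⟨y, rfl⟩
    exact ⟨mul x y, h.mul_mul_eq_lie x y⟩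

/-- Left multiplication `x ↦ mul x`, as a map onto the Lie algebra of left multiplications. -/
def leftMul (h : IsLeftLeibniz mul) : A →ₗ[F] h.leftMulLieSubalgebra :=
  mul.rangeRestrict

theorem leftMul_mul (h : IsLeftLeibniz mul) (x y : A) :
    h.leftMul (mul x y) = ⁅h.leftMul x, h.leftMul y⁆ :=
  Subtype.ext (h.mul_mul_eq_lie x y)

theorem map_leftMul_ds (h : IsLeftLeibniz mul) (n : ℕ) :
    (ds mul ⊤ n).map h.leftMul = (derivedSeries F h.leftMulLieSubalgebra n).toSubmodule := by
  induction n with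
  | zero => exact Submodule.map_top _ |>.trans mul.range_rangeRestrict
  | succ n ih =>
    rw [derivedSeries_def, derivedSeriesOfIdeal_succ, ← derivedSeries_def,
      LieSubmodule.lieIdeal_oper_eq_linear_span', ds, mulSub, Submodule.map_span]
    simp only [← LieSubmodule.mem_toSubmodule, ← ih]
    congr 1
    ext g
    simp [leftMul_mul]

theorem leftMul_mem_derivedSeries (h : IsLeftLeibniz mul) {n : ℕ} {x : A}
    (hx : x ∈ ds mul ⊤ n) : h.leftMul x ∈ derivedSeries F h.leftMulLieSubalgebra n := by
  rw [← LieSubmodule.mem_toSubmodule, ← h.map_leftMul_ds]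
  exact Submodule.mem_map_of_mem hx

theorem isSolvable_leftMulLieSubalgebra (h : IsLeftLeibniz mul) (hsolv : IsSolvableSub mul ⊤) :
    IsSolvable h.leftMulLieSubalgebra := by
  obtain ⟨m, hm⟩ := hsolv
  refine IsSolvable.mk (R := F) (k := m) ?_
  rw [← LieSubmodule.toSubmodule_eq_bot, ← h.map_leftMul_ds, hm, Submodule.map_bot]

theorem lcs_ds_le_lcs_derivedSeries (h : IsLeftLeibniz mul) (n k : ℕ) :
    lcs mul (ds mul ⊤ n) k ≤
      ((derivedSeries F h.leftMulLieSubalgebra n).lcs A k).toSubmodule := by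
  induction k with
  | zero => exact le_top
  | succ k ih =>
    rw [lcs, mulSub_eq_map₂, Submodule.map₂_le, LieIdeal.lcs_succ]
    exact fun b hb c hc ↦ LieSubmodule.lie_mem_lie (h.leftMul_mem_derivedSeries hb) (ih hc)

end IsLeftLeibniz

end LeibnizAlgebras

/-- over characteristic zero, if `A` is solvable then `A²` is
nilpotent. -/
theorem stmt_9 {F A : Type*} [Field F] [CharZero F]
    [AddCommGroup A] [Module F A] [FiniteDimensional F A]
    (mul : A →ₗ[F] A →ₗ[F] A)
    (hleib : ∀ x y z : A, mul x (mul y z) = mul (mul x y) z + mul y (mul x z))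
    (hsolv : IsSolvableSub mul (⊤ : Submodule F A)) :
    IsNilpotentSub mul (mulSub mul ⊤ ⊤) := by
  have leibniz : IsLeftLeibniz mul := hleib
  have := leibniz.isSolvable_leftMulLieSubalgebra hsolv
  obtain ⟨k, hk⟩ := exists_lcs_derivedSeries_one_eq_bot F leibniz.leftMulLieSubalgebra A
  refine ⟨k, le_bot_iff.mp ((leibniz.lcs_ds_le_lcs_derivedSeries 1 k).trans ?_)⟩
  rw [hk, LieSubmodule.bot_toSubmodule]
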